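/- arXiv:2512.15428 — 6 statements merged into one kernel-verified Lean document; each statement's English description precedes it below -/
import Mathlib

section
/- Let d be a positive integer, let ρ and E be positive semidefinite Hermitian d×d complex matrices, and let A be a Hermitian d×d complex matrix. Then (Re Tr[ρAE])² ≤ |Tr[ρAE]|² ≤ Tr[ρE] · Tr[ρAEA]. -/
open Matrix
open scoped ComplexOrder

lemma frob_cs {d : ℕ} (X Y : Matrix (Fin d) (Fin d) ℂ) :
    ‖(Xᴴ * Y).trace‖ ^ 2 ≤ ((Xᴴ * X).trace).re * ((Yᴴ * Y).trace).re := by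
  have key : ∀ X Y : Matrix (Fin d) (Fin d) ℂ, (Xᴴ * Y).trace =
      inner ℂ (WithLp.toLp 2 (fun p : Fin d × Fin d => X p.1 p.2))
        (WithLp.toLp 2 (fun p : Fin d × Fin d => Y p.1 p.2)) := by
    intro X Y
    simp only [Matrix.trace, Matrix.diag, Matrix.mul_apply, conjTranspose_apply,
      PiLp.inner_apply, Fintype.sum_prod_type, RCLike.inner_apply]
    rw [Finset.sum_comm]
    refine Finset.sum_congr rfl fun i _ => Finset.sum_congr rfl fun j _ => ?_
    rw [mul_comm]; rfl
  have h := norm_inner_le_norm (𝕜 := ℂ) (WithLp.toLp 2 (fun p : Fin d × Fin d => X p.1 p.2))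
        (WithLp.toLp 2 (fun p : Fin d × Fin d => Y p.1 p.2))
  rw [key, key, key, inner_self_eq_norm_sq_to_K, inner_self_eq_norm_sq_to_K]
  have h2 := pow_le_pow_left₀ (norm_nonneg _) h 2
  rw [mul_pow] at h2
  convert h2 using 2 <;> norm_cast

lemma psd_factor {d : ℕ} {M : Matrix (Fin d) (Fin d) ℂ} (h : M.PosSemidef) :
    ∃ B : Matrix (Fin d) (Fin d) ℂ, M = Bᴴ * B := by
  open scoped MatrixOrder in
  exact CStarAlgebra.nonneg_iff_eq_star_mul_self.mp h.nonneg

/-- The Cauchy–Schwarz chain `(Re Tr[ρAE])² ≤ |Tr[ρAE]|² ≤ Tr[ρE]·Tr[ρAEA]`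
for positive semidefinite `ρ`, `E` and Hermitian `A`. -/
theorem stmt1 (d : ℕ) (hd : 0 < d) (ρ E A : Matrix (Fin d) (Fin d) ℂ)
    (hρ : ρ.PosSemidef) (hE : E.PosSemidef) (hA : A.IsHermitian) :
    (((ρ * A * E).trace).re) ^ 2 ≤ ‖(ρ * A * E).trace‖ ^ 2 ∧
    ‖(ρ * A * E).trace‖ ^ 2 ≤ ((ρ * E).trace).re * ((ρ * A * E * A).trace).re := by
  refine ⟨sq_le_sq.mpr (by simpa using Complex.abs_re_le_norm _), ?_⟩
  obtain ⟨B, rfl⟩ := psd_factor hρ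
  obtain ⟨C, rfl⟩ := psd_factor hE
  have h := frob_cs (B * Cᴴ) (B * A * Cᴴ)
  have e1 : ((B * Cᴴ)ᴴ * (B * A * Cᴴ)).trace = (Bᴴ * B * A * (Cᴴ * C)).trace := by
    rw [← Matrix.mul_assoc _ Cᴴ C, Matrix.trace_mul_comm _ C]
    simp [Matrix.mul_assoc]
  have e2 : ((B * Cᴴ)ᴴ * (B * Cᴴ)).trace = (Bᴴ * B * (Cᴴ * C)).trace := by
    rw [← Matrix.mul_assoc _ Cᴴ C, Matrix.trace_mul_comm _ C]
    simp [Matrix.mul_assoc]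
  have e3 : ((B * A * Cᴴ)ᴴ * (B * A * Cᴴ)).trace = (Bᴴ * B * A * (Cᴴ * C) * A).trace := by
    have : Bᴴ * B * A * (Cᴴ * C) * A = (Bᴴ * B * A * Cᴴ) * (C * A) := by
      simp only [Matrix.mul_assoc]
    rw [this, Matrix.trace_mul_comm _ (C * A)]
    simp [Matrix.mul_assoc, hA.eq]
  rwa [e1, e2, e3] at h
end

section
/- Let d be a positive integer, let ρ be a positive definite Hermitian d×d complex matrix, and let {E_i}_{i∈I} be a finite family of nonzero positive semidefinite Hermitian d×d matrices with Σ_i E_i = 𝟙. Then for every Hermitian d×d matrix A, Σ_i (Re Tr[ρAE_i])² / Tr[ρE_i] ≤ Re Tr[ρA²]. (Equivalently, the classical Fisher information of the measurement never exceeds the quantum Fisher information.) -/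
open Matrix
open scoped ComplexOrder

open scoped MatrixOrder in
lemma aux_tr {d : ℕ} {P Q : Matrix (Fin d) (Fin d) ℂ} (hP : P.PosSemidef) (hQ : Q.PosSemidef) :
    0 ≤ ((P * Q).trace).re := by
  obtain ⟨B, hB⟩ := CStarAlgebra.nonneg_iff_eq_star_mul_self.mp hP.nonneg
  have h := (hQ.mul_mul_conjTranspose_same B).trace_nonneg
  have e : (P * Q).trace = (B * Q * Bᴴ).trace := by
    rw [hB, star_eq_conjTranspose, Matrix.mul_assoc, Matrix.trace_mul_comm]
  rw [e]
  exact (Complex.le_def.mp h).1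

/-- For a POVM `{E i}` of nonzero effects and a full-rank state `ρ`, the classical Fisher
information along any Hermitian direction `A` never exceeds the quantum Fisher information:
`Σ_i (Re Tr[ρAE_i])² / Tr[ρE_i] ≤ Re Tr[ρA²]`. -/
theorem stmt2 (d : ℕ) (hd : 0 < d) (ι : Type) [Fintype ι]
    (ρ : Matrix (Fin d) (Fin d) ℂ) (hρ : ρ.PosDef)
    (E : ι → Matrix (Fin d) (Fin d) ℂ)
    (hE : ∀ i, (E i).PosSemidef) (hEne : ∀ i, E i ≠ 0)
    (hsum : ∑ i, E i = 1)
    (A : Matrix (Fin d) (Fin d) ℂ) (hA : A.IsHermitian) :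
    ∑ i, (((ρ * A * E i).trace).re) ^ 2 / ((ρ * E i).trace).re
      ≤ ((ρ * A * A).trace).re := by
  have key : ∀ i, (((ρ * A * E i).trace).re) ^ 2 / ((ρ * E i).trace).re
      ≤ ((ρ * A * E i * A).trace).re := by
    intro i
    have q : ∀ t : ℝ, 0 ≤ ((ρ * A * E i * A).trace).re - 2 * t * ((ρ * A * E i).trace).re
        + t ^ 2 * ((ρ * E i).trace).re := by
      intro t
      have hH : (A - (t : ℂ) • 1)ᴴ = A - (t : ℂ) • 1 := by
        simp [hA.eq]
      have h := aux_tr hρ.posSemidef ((hE i).mul_mul_conjTranspose_same (A - (t : ℂ) • 1))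
      rw [hH] at h
      have c : ((ρ * E i * A).trace).re = ((ρ * A * E i).trace).re := by
        have : (ρ * E i * A).trace = star ((ρ * A * E i).trace) := by
          rw [← Matrix.trace_conjTranspose, Matrix.conjTranspose_mul, Matrix.conjTranspose_mul,
            hA.eq, (hE i).isHermitian.eq, hρ.isHermitian.eq, ← Matrix.mul_assoc,
            Matrix.trace_mul_comm, ← Matrix.mul_assoc, Matrix.trace_mul_cycle]
        rw [this]; simp
      have e : ρ * ((A - (t : ℂ) • 1) * E i * (A - (t : ℂ) • 1)) =
          ρ * A * E i * A - (t : ℂ) • (ρ * A * E i) - (t : ℂ) • (ρ * E i * A)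
            + ((t ^ 2 : ℝ) : ℂ) • (ρ * E i) := by
        simp only [Matrix.mul_sub, Matrix.sub_mul, Matrix.mul_smul, Matrix.smul_mul,
          Matrix.mul_one, Matrix.one_mul, Matrix.mul_assoc, smul_sub, smul_smul]
        push_cast
        rw [pow_two]
        abel
      rw [e] at h
      simp only [Matrix.trace_add, Matrix.trace_sub, Matrix.trace_smul, Complex.add_re,
        Complex.sub_re, smul_eq_mul, Complex.re_ofReal_mul] at h
      rw [c] at h
      linarith
    generalize ((ρ * A * E i * A).trace).re = c at q ⊢
    generalize ((ρ * A * E i).trace).re = a at q ⊢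
    generalize ((ρ * E i).trace).re = p at q ⊢
    have h := q (a / p)
    by_cases hp : p = 0
    · subst hp; simpa using h
    · have : c - 2 * (a / p) * a + (a / p) ^ 2 * p = c - a ^ 2 / p := by
        field_simp
        ring
      linarith
  refine (Finset.sum_le_sum fun i _ => key i).trans (le_of_eq ?_)
  rw [← Complex.re_sum, ← Matrix.trace_sum, ← Finset.sum_mul, ← Finset.mul_sum, hsum,
    Matrix.mul_one]
end

section
/- Let d be a positive integer, let ρ be a positive definite Hermitian d×d complex matrix, and let {E_i}_{i∈I} be a finite family of nonzero positive semidefinite Hermitian d×d matrices with Σ_i E_i = 𝟙. Define the frame operator F on Hermitian matrices by F(B) = Σ_i (Re Tr[ρE_iB] / Tr[ρE_i]) E_i. If B is a nonzero Hermitian matrix and λ is a real number with F(B) = λB, then 0 ≤ λ ≤ 1. -/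
open Matrix
open scoped ComplexOrder

/-- The frame operator `F(B) = Σ_i (Re Tr[ρE_iB] / Tr[ρE_i]) E_i`. -/
noncomputable def frameOp {d : ℕ} {ι : Type} [Fintype ι]
    (ρ : Matrix (Fin d) (Fin d) ℂ) (E : ι → Matrix (Fin d) (Fin d) ℂ)
    (B : Matrix (Fin d) (Fin d) ℂ) : Matrix (Fin d) (Fin d) ℂ :=
  ∑ i, ((((ρ * E i * B).trace).re / ((ρ * E i).trace).re) • E i)

open scoped MatrixOrder Matrix.Norms.L2Operator in
lemma aux_fac {d : ℕ} (ρ : Matrix (Fin d) (Fin d) ℂ) (hρ : ρ.PosSemidef) :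
    ∃ C : Matrix (Fin d) (Fin d) ℂ, ρ = Cᴴ * C :=
  CStarAlgebra.nonneg_iff_eq_star_mul_self.mp hρ.nonneg

lemma aux_nonneg {d : ℕ} (ρ M : Matrix (Fin d) (Fin d) ℂ) (hρ : ρ.PosSemidef) (hM : M.PosSemidef) :
    0 ≤ ((ρ * M).trace).re := by
  obtain ⟨C, rfl⟩ := aux_fac _ hρ
  have h := (hM.mul_mul_conjTranspose_same C).trace_nonneg
  rw [Matrix.trace_mul_comm, ← Matrix.mul_assoc] at h
  exact (Complex.le_def.mp h).1

lemma aux_pos {d : ℕ} (ρ B : Matrix (Fin d) (Fin d) ℂ) (hρ : ρ.PosDef) (hB : B.IsHermitian)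
    (hBne : B ≠ 0) : 0 < ((ρ * (B * B)).trace).re := by
  obtain ⟨C, hC⟩ := aux_fac _ hρ.posSemidef
  have e : (ρ * (B * B)).trace = ((C * B) * (C * B)ᴴ).trace := by
    rw [hC, Matrix.conjTranspose_mul, hB.eq, Matrix.mul_assoc, Matrix.trace_mul_comm]
    simp only [Matrix.mul_assoc]
  have hn : 0 ≤ ((C * B) * (C * B)ᴴ).trace :=
    (Matrix.posSemidef_self_mul_conjTranspose (C * B)).trace_nonneg
  have hne : ((C * B) * (C * B)ᴴ).trace ≠ 0 := by
    intro h
    rw [Matrix.trace_mul_conjTranspose_self_eq_zero_iff] at h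
    apply hBne
    have h2 : ρ * B = 0 := by rw [hC, Matrix.mul_assoc, h, Matrix.mul_zero]
    exact (hρ.isUnit.mul_right_eq_zero).mp h2
  rw [e]
  exact (Complex.lt_def.mp (lt_of_le_of_ne hn hne.symm)).1

lemma aux_symm {d : ℕ} (ρ A B : Matrix (Fin d) (Fin d) ℂ) (hρ : ρ.IsHermitian)
    (hA : A.IsHermitian) (hB : B.IsHermitian) :
    ((ρ * (B * A)).trace).re = ((ρ * (A * B)).trace).re := by
  have h := Matrix.trace_conjTranspose (ρ * (A * B))
  rw [Matrix.conjTranspose_mul, Matrix.conjTranspose_mul, hρ.eq, hA.eq, hB.eq,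
    Matrix.trace_mul_comm] at h
  rw [h]; simp

/-- Every eigenvalue of the frame operator lies in the interval `[0, 1]`. -/
theorem stmt3 (d : ℕ) (hd : 0 < d) (ι : Type) [Fintype ι]
    (ρ : Matrix (Fin d) (Fin d) ℂ) (hρ : ρ.PosDef)
    (E : ι → Matrix (Fin d) (Fin d) ℂ)
    (hE : ∀ i, (E i).PosSemidef) (hEne : ∀ i, E i ≠ 0)
    (hsum : ∑ i, E i = 1)
    (B : Matrix (Fin d) (Fin d) ℂ) (hB : B.IsHermitian) (hBne : B ≠ 0)
    (lam : ℝ) (hEig : frameOp ρ E B = lam • B) :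
    0 ≤ lam ∧ lam ≤ 1 := by
  have hR := aux_pos ρ B hρ hB hBne
  have hp : ∀ i, 0 ≤ ((ρ * E i).trace).re := fun i => aux_nonneg _ _ hρ.posSemidef (hE i)
  have key : lam * ((ρ * (B * B)).trace).re =
      ∑ i, (((ρ * E i * B).trace).re / ((ρ * E i).trace).re) * ((ρ * E i * B).trace).re := by
    have h := congrArg (fun X => ((ρ * (X * B)).trace).re) hEig
    simp only [frameOp, Finset.sum_mul, Finset.mul_sum, Matrix.trace_sum, Complex.re_sum,
      Matrix.smul_mul, Matrix.mul_smul, Matrix.trace_smul, Complex.smul_re, smul_eq_mul,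
      ← Matrix.mul_assoc] at h
    simp only [← Matrix.mul_assoc]
    exact h.symm
  have hlow : 0 ≤ lam * ((ρ * (B * B)).trace).re := by
    rw [key]
    refine Finset.sum_nonneg fun i _ => ?_
    rw [div_mul_eq_mul_div]
    exact div_nonneg (mul_self_nonneg _) (hp i)
  have hup : lam * ((ρ * (B * B)).trace).re ≤ ((ρ * (B * B)).trace).re := by
    have e : ((ρ * (B * B)).trace).re = ∑ i, ((ρ * (B * E i * B)).trace).re := by
      rw [← Complex.re_sum, ← Matrix.trace_sum, ← Finset.mul_sum, ← Finset.sum_mul,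
        ← Finset.mul_sum, hsum, Matrix.mul_one]
    rw [key, e]
    refine Finset.sum_le_sum fun i _ => ?_
    have hs := aux_symm ρ (E i) B hρ.isHermitian (hE i).isHermitian hB
    set c : ℝ := ((ρ * E i * B).trace).re / ((ρ * E i).trace).re with hc
    have hH : (B - c • (1 : Matrix (Fin d) (Fin d) ℂ))ᴴ = B - c • 1 := by
      simp [hB.eq]
    have hq := aux_nonneg ρ _ hρ.posSemidef
      ((hE i).mul_mul_conjTranspose_same (B - c • (1 : Matrix (Fin d) (Fin d) ℂ)))
    rw [hH] at hq
    simp only [Matrix.sub_mul, Matrix.mul_sub, Matrix.smul_mul, Matrix.mul_smul, Matrix.one_mul,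
      Matrix.mul_one, Matrix.trace_sub, Matrix.trace_smul, Complex.sub_re, Complex.smul_re,
      smul_eq_mul] at hq
    rw [hs, ← Matrix.mul_assoc ρ (E i) B] at hq
    have hcp : c * (c * ((ρ * E i).trace).re) = c * ((ρ * E i * B).trace).re := by
      by_cases h0 : ((ρ * E i).trace).re = 0
      · have : c = 0 := by rw [hc, h0, div_zero]
        rw [this]; simp
      · rw [hc, div_mul_cancel₀ _ h0]
    linarith
  constructor
  · exact nonneg_of_mul_nonneg_left hlow hR
  · exact le_of_mul_le_mul_right (by linarith) hR
end

section
/- Let d be a positive integer, let ρ be a positive definite Hermitian d×d complex matrix with trace 1, and let {E_i}_{i∈I} be a finite family of nonzero positive semidefinite Hermitian d×d matrices with Σ_i E_i = 𝟙 whose real span is the whole space of Hermitian d×d matrices (an informationally complete POVM). If a Hermitian matrix A satisfies F(A) = A, where F(A) = Σ_i (Re Tr[ρE_iA] / Tr[ρE_i]) E_i, then A is a real scalar multiple of the identity matrix. In particular, the eigenvalue 1 of the frame operator F is nondegenerate, with eigenvector 𝟙. -/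
open Matrix
open scoped ComplexOrder

open scoped MatrixOrder Matrix.Norms.L2Operator in
lemma aux_sqrt {d : ℕ} {M : Matrix (Fin d) (Fin d) ℂ} (hM : M.PosSemidef) :
    ∃ B : Matrix (Fin d) (Fin d) ℂ, M = Bᴴ * B :=
  CStarAlgebra.nonneg_iff_eq_star_mul_self.mp hM.nonneg

lemma aux_zero {d : ℕ} {ρ M : Matrix (Fin d) (Fin d) ℂ} (hρ : ρ.PosDef) (hM : M.PosSemidef) :
    0 ≤ ((ρ * M).trace).re ∧ (((ρ * M).trace).re = 0 → M = 0) := by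
  obtain ⟨B, rfl⟩ := aux_sqrt hM
  have h1 : (ρ * (Bᴴ * B)).trace = (B * ρ * Bᴴ).trace := by
    rw [← Matrix.mul_assoc, Matrix.trace_mul_comm, Matrix.mul_assoc]
  have h2 : (B * ρ * Bᴴ).PosSemidef := hρ.posSemidef.mul_mul_conjTranspose_same B
  have h3 := h2.trace_nonneg
  rw [h1]
  rw [Complex.le_def] at h3
  refine ⟨h3.1, fun h => ?_⟩
  have h4 : (B * ρ * Bᴴ).trace = 0 := Complex.ext h h3.2.symm
  rw [h2.trace_eq_zero_iff] at h4
  have h5 : Bᴴ = 0 := by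
    rw [Matrix.ext_iff_mulVec]
    intro x
    rw [Matrix.zero_mulVec]
    by_contra hx
    have := hρ.dotProduct_mulVec_pos hx
    have h6 : star (Bᴴ *ᵥ x) ⬝ᵥ (ρ *ᵥ (Bᴴ *ᵥ x)) = star x ⬝ᵥ ((B * ρ * Bᴴ) *ᵥ x) := by
      rw [Matrix.star_mulVec, Matrix.conjTranspose_conjTranspose, ← Matrix.dotProduct_mulVec,
        Matrix.mulVec_mulVec, Matrix.mulVec_mulVec]
    rw [h6, h4] at this
    simp at this
  rw [h5, Matrix.zero_mul]

/-- For a full-rank density matrix `ρ` and an informationally complete POVM,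
every fixed point of the frame operator is a real multiple of the identity:
the eigenvalue `1` is nondegenerate, with eigenvector `𝟙`. -/
theorem stmt5 (d : ℕ) (hd : 0 < d) (ι : Type) [Fintype ι]
    (ρ : Matrix (Fin d) (Fin d) ℂ) (hρ : ρ.PosDef) (hρtr : ρ.trace = 1)
    (E : ι → Matrix (Fin d) (Fin d) ℂ)
    (hE : ∀ i, (E i).PosSemidef) (hEne : ∀ i, E i ≠ 0)
    (hsum : ∑ i, E i = 1)
    (hIC : ∀ A : Matrix (Fin d) (Fin d) ℂ, A.IsHermitian →
      A ∈ Submodule.span ℝ (Set.range E))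
    (A : Matrix (Fin d) (Fin d) ℂ) (hA : A.IsHermitian)
    (hFA : frameOp ρ E A = A) :
    ∃ c : ℝ, A = c • (1 : Matrix (Fin d) (Fin d) ℂ) := by
  set a : ι → ℝ := fun i => ((ρ * E i * A).trace).re / ((ρ * E i).trace).re with ha
  have hFA' : ∑ i, a i • E i = A := hFA
  have hp : ∀ i, ((ρ * E i).trace).re ≠ 0 := fun i h => hEne i ((aux_zero hρ (hE i)).2 h)
  have hap : ∀ i, ((ρ * E i * A).trace).re = a i * ((ρ * E i).trace).re := fun i => by
    simp only [ha]; field_simp [hp i]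
  have hN : ∀ i, (A - a i • (1 : Matrix (Fin d) (Fin d) ℂ))ᴴ = A - a i • 1 := fun i => by
    rw [Matrix.conjTranspose_sub, hA.eq, Matrix.conjTranspose_smul]; simp
  have hcr : ∀ i, ((ρ * (A * E i)).trace).re = ((ρ * E i * A).trace).re := fun i => by
    have : star ((ρ * (A * E i)).trace) = (ρ * E i * A).trace := by
      rw [← Matrix.trace_conjTranspose, Matrix.conjTranspose_mul, Matrix.conjTranspose_mul,
        hA.eq, (hE i).1.eq, hρ.1.eq, Matrix.trace_mul_comm, Matrix.mul_assoc]
    rw [← this]; simp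
  have hexp : ∀ i, ((ρ * ((A - a i • 1) * E i * (A - a i • 1))).trace).re
      = ((ρ * (A * E i * A)).trace).re - a i * ((ρ * E i * A).trace).re := fun i => by
    have e : ρ * ((A - a i • 1) * E i * (A - a i • 1)) = ρ * (A * E i * A)
        - a i • (ρ * (A * E i)) - a i • (ρ * E i * A) + (a i * a i) • (ρ * E i) := by
      simp only [sub_mul, mul_sub, Matrix.smul_mul, Matrix.mul_smul, Matrix.mul_one,
        Matrix.one_mul, Matrix.mul_assoc, smul_smul]
      abel
    rw [e]
    simp only [Matrix.trace_add, Matrix.trace_sub, Matrix.trace_smul, Complex.add_re,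
      Complex.sub_re, Complex.real_smul, Complex.re_ofReal_mul, hcr, hap]
    ring
  have hs1 : ∑ i, ((ρ * (A * E i * A)).trace).re = ((ρ * (A * A)).trace).re := by
    rw [← Complex.re_sum, ← Matrix.trace_sum, ← Matrix.mul_sum, ← Finset.sum_mul, ← Finset.mul_sum,
      hsum, Matrix.mul_one]
  have hs2 : ∑ i, a i * ((ρ * E i * A).trace).re = ((ρ * (A * A)).trace).re := by
    conv_rhs => enter [1, 1, 2, 1]; rw [← hFA']
    rw [Finset.sum_mul, Matrix.mul_sum, Matrix.trace_sum, Complex.re_sum]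
    refine Finset.sum_congr rfl fun i _ => ?_
    rw [Matrix.smul_mul, Matrix.mul_smul, Matrix.trace_smul, Complex.real_smul,
      Complex.re_ofReal_mul, Matrix.mul_assoc]
  have hps : ∀ i, ((A - a i • 1) * E i * (A - a i • 1)).PosSemidef := fun i => by
    have := (hE i).mul_mul_conjTranspose_same (A - a i • 1)
    rwa [hN] at this
  have hz : ∀ i, (A - a i • 1) * E i * (A - a i • 1) = 0 := by
    have h0 : ∑ i, ((ρ * ((A - a i • 1) * E i * (A - a i • 1))).trace).re = 0 := by
      simp only [hexp]
      rw [Finset.sum_sub_distrib, hs1, hs2, sub_self]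
    rw [Finset.sum_eq_zero_iff_of_nonneg (fun i _ => (aux_zero hρ (hps i)).1)] at h0
    exact fun i => (aux_zero hρ (hps i)).2 (h0 i (Finset.mem_univ i))
  have hEA : ∀ i, E i * (A - a i • 1) = 0 := fun i => by
    obtain ⟨B, hB⟩ := aux_sqrt (hE i)
    have h := hz i
    have h' : (B * (A - a i • 1))ᴴ * (B * (A - a i • 1)) = 0 := by
      rw [Matrix.conjTranspose_mul, hN, ← h, hB]
      simp only [Matrix.mul_assoc]
    rw [Matrix.conjTranspose_mul_self_eq_zero] at h'
    rw [hB, Matrix.mul_assoc, h', Matrix.mul_zero]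
  have hcomm : ∀ i, E i * A = A * E i := fun i => by
    have h1 := hEA i
    have h2 := congrArg Matrix.conjTranspose h1
    rw [Matrix.conjTranspose_mul, hN, (hE i).1.eq, Matrix.conjTranspose_zero, sub_mul] at h2
    rw [mul_sub] at h1
    rw [sub_eq_zero.mp h1, sub_eq_zero.mp h2]; simp
  have hherm : ∀ H : Matrix (Fin d) (Fin d) ℂ, H.IsHermitian → H * A = A * H := fun H hH => by
    have hm := hIC H hH
    clear hH
    induction hm using Submodule.span_induction with
    | mem x hx => obtain ⟨i, rfl⟩ := hx; exact hcomm i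
    | zero => simp
    | add x y _ _ hx hy => rw [add_mul, mul_add, hx, hy]
    | smul c x _ hx => rw [Matrix.smul_mul, Matrix.mul_smul, hx]
  have hall : ∀ X : Matrix (Fin d) (Fin d) ℂ, X * A = A * X := fun X => by
    have h1 := hherm _ (realPart X).2
    have h2 := hherm _ (imaginaryPart X).2
    rw [← realPart_add_I_smul_imaginaryPart X, add_mul, mul_add, h1, Matrix.smul_mul,
      Matrix.mul_smul, h2]
  have hr : A ∈ Set.range (Matrix.scalar (Fin d) : ℂ → Matrix (Fin d) (Fin d) ℂ) := by
    rw [Matrix.mem_range_scalar_iff_commute_single']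
    intro i j
    exact hall _
  obtain ⟨c, hc⟩ := hr
  refine ⟨c.re, ?_⟩
  have h00 := hA.apply ⟨0, hd⟩ ⟨0, hd⟩
  rw [← hc] at h00
  simp at h00
  have hre := Complex.conj_eq_iff_re.mp h00
  rw [← hc]
  ext i j
  by_cases hij : i = j
  · subst hij; simp [hre]
  · simp [hij]
end

section
/- Let d be a positive integer, let ρ be a positive definite Hermitian d×d complex matrix with trace 1, and let {E_i}_{i∈I} be a finite family of nonzero positive semidefinite Hermitian d×d matrices with Σ_i E_i = 𝟙 whose real span is the whole space of Hermitian d×d matrices (an informationally complete POVM). Then for every nonzero Hermitian matrix L with Re Tr[ρL] = 0, the classical Fisher information is strictly smaller than the quantum Fisher information: Σ_i (Re Tr[ρLE_i])² / Tr[ρE_i] < Re Tr[ρL²]. (An IC-POVM can never saturate the quantum Cramér–Rao bound.) -/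
open Matrix
open scoped ComplexOrder

open scoped MatrixOrder in
lemma aux_fac_s10 {d : ℕ} {A : Matrix (Fin d) (Fin d) ℂ} (hA : A.PosSemidef) :
    ∃ S : Matrix (Fin d) (Fin d) ℂ, A = Sᴴ * S :=
  CStarAlgebra.nonneg_iff_eq_star_mul_self.mp hA.nonneg

lemma aux_psd {d : ℕ} {ρ A : Matrix (Fin d) (Fin d) ℂ} (hρ : ρ.PosDef) (hA : A.PosSemidef) :
    0 ≤ ((ρ * A).trace).re ∧ (((ρ * A).trace).re = 0 → A = 0) := by
  obtain ⟨S, hS, hSe⟩ : ∃ S : Matrix (Fin d) (Fin d) ℂ, IsUnit S ∧ ρ = Sᴴ * S := by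
    obtain ⟨S, hS⟩ := aux_fac_s10 hρ.posSemidef
    refine ⟨S, ?_, hS⟩
    have h := hρ.isUnit
    rw [Matrix.isUnit_iff_isUnit_det] at h ⊢
    rw [hS, Matrix.det_mul] at h
    exact isUnit_of_mul_isUnit_right h
  have hps : (S * A * Sᴴ).PosSemidef := hA.mul_mul_conjTranspose_same S
  have ht : (ρ * A).trace = (S * A * Sᴴ).trace := by
    rw [hSe, Matrix.mul_assoc, Matrix.trace_mul_comm]
  have h0 := hps.trace_nonneg
  rw [ht]
  rw [Complex.le_def] at h0
  refine ⟨by simpa using h0.1, fun h => ?_⟩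
  have hz : (S * A * Sᴴ).trace = 0 := Complex.ext h (by simpa using h0.2.symm)
  have hz2 := hps.trace_eq_zero_iff.mp hz
  have hS2 : IsUnit Sᴴ := by
    have := hS.star
    rwa [Matrix.star_eq_conjTranspose] at this
  have h3 : S * A = 0 := hS2.mul_left_eq_zero.mp hz2
  exact hS.mul_right_eq_zero.mp h3

lemma aux_kill {d : ℕ} {E X : Matrix (Fin d) (Fin d) ℂ} (hE : E.PosSemidef)
    (h : Xᴴ * E * X = 0) : E * X = 0 := by
  obtain ⟨C, hC⟩ := aux_fac_s10 hE
  have : (C * X)ᴴ * (C * X) = 0 := by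
    rw [← h, hC, Matrix.conjTranspose_mul]; simp only [Matrix.mul_assoc]
  have h2 := Matrix.conjTranspose_mul_self_eq_zero.mp this
  rw [hC, Matrix.mul_assoc, h2, Matrix.mul_zero]

lemma aux_expand {d : ℕ} {ρ E L : Matrix (Fin d) (Fin d) ℂ} (hρ : ρ.IsHermitian)
    (hE : E.IsHermitian) (hL : L.IsHermitian) (c : ℝ) :
    ((ρ * ((L - (c:ℂ) • 1)ᴴ * E * (L - (c:ℂ) • 1))).trace).re
      = ((ρ * L * E * L).trace).re - 2 * c * ((ρ * L * E).trace).re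
        + c ^ 2 * ((ρ * E).trace).re := by
  have h1 : ((ρ * E * L).trace).re = ((ρ * L * E).trace).re := by
    have : (ρ * L * E).trace = star ((ρ * E * L).trace) := by
      rw [← Matrix.trace_conjTranspose, Matrix.conjTranspose_mul, Matrix.conjTranspose_mul,
        hρ.eq, hE.eq, hL.eq, Matrix.mul_assoc ρ, Matrix.trace_mul_comm ρ, Matrix.mul_assoc]
    rw [this]; simp
  have hX : (L - (c:ℂ) • (1 : Matrix (Fin d) (Fin d) ℂ))ᴴ = L - (c:ℂ) • 1 := by
    simp [Matrix.conjTranspose_sub, Matrix.conjTranspose_smul, hL.eq]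
  have h2 : ρ * ((L - (c:ℂ) • 1) * E * (L - (c:ℂ) • 1))
      = ρ * L * E * L - (c:ℂ) • (ρ * L * E) - (c:ℂ) • (ρ * E * L) + (c:ℂ) • (c:ℂ) • (ρ * E) := by
    simp only [Matrix.sub_mul, Matrix.mul_sub, Matrix.smul_mul, Matrix.mul_smul, Matrix.one_mul,
      Matrix.mul_one, Matrix.mul_assoc, smul_sub]
    abel
  rw [hX, h2]
  simp only [Matrix.trace_add, Matrix.trace_sub, Matrix.trace_smul, smul_eq_mul, Complex.add_re,
    Complex.sub_re, Complex.re_ofReal_mul, h1]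
  ring

/-- An informationally complete POVM can never saturate the quantum Cramér–Rao bound:
for every nonzero mean-zero Hermitian direction `L`, the classical Fisher information
`Σ_i (Re Tr[ρLE_i])² / Tr[ρE_i]` is strictly smaller than the quantum Fisher
information `Re Tr[ρL²]`. -/
theorem stmt10 (d : ℕ) (hd : 0 < d) (ι : Type) [Fintype ι]
    (ρ : Matrix (Fin d) (Fin d) ℂ) (hρ : ρ.PosDef) (hρtr : ρ.trace = 1)
    (E : ι → Matrix (Fin d) (Fin d) ℂ)
    (hE : ∀ i, (E i).PosSemidef) (hEne : ∀ i, E i ≠ 0)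
    (hsum : ∑ i, E i = 1)
    (hIC : ∀ B : Matrix (Fin d) (Fin d) ℂ, B.IsHermitian →
      B ∈ Submodule.span ℝ (Set.range E))
    (L : Matrix (Fin d) (Fin d) ℂ) (hL : L.IsHermitian) (hLne : L ≠ 0)
    (hmz : ((ρ * L).trace).re = 0) :
    ∑ i, (((ρ * L * E i).trace).re) ^ 2 / ((ρ * E i).trace).re
      < ((ρ * L * L).trace).re := by
  have hp : ∀ i, 0 < ((ρ * E i).trace).re := fun i =>
    lt_of_le_of_ne (aux_psd hρ (hE i)).1 fun h => hEne i ((aux_psd hρ (hE i)).2 h.symm)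
  set c : ι → ℝ := fun i => ((ρ * L * E i).trace).re / ((ρ * E i).trace).re with hc
  have hterm : ∀ i, ((ρ * ((L - (c i:ℂ) • 1)ᴴ * E i * (L - (c i:ℂ) • 1))).trace).re
      = ((ρ * L * E i * L).trace).re
        - (((ρ * L * E i).trace).re) ^ 2 / ((ρ * E i).trace).re := fun i => by
    rw [aux_expand hρ.isHermitian (hE i).isHermitian hL]
    have := (hp i).ne'
    simp only [hc]
    field_simp
    ring
  have hps : ∀ i, ((L - (c i:ℂ) • 1)ᴴ * E i * (L - (c i:ℂ) • 1)).PosSemidef := fun i =>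
    (hE i).conjTranspose_mul_mul_same _
  have htot : ∑ i, ((ρ * L * E i * L).trace).re = ((ρ * L * L).trace).re := by
    rw [← Complex.re_sum, ← Matrix.trace_sum, ← Finset.sum_mul, ← Finset.mul_sum, hsum,
      Matrix.mul_one]
  by_contra hcon
  have hle : ∀ i, (((ρ * L * E i).trace).re) ^ 2 / ((ρ * E i).trace).re
      ≤ ((ρ * L * E i * L).trace).re := fun i => by
    have := (aux_psd hρ (hps i)).1
    rw [hterm] at this
    linarith
  have hEL : ∀ i, E i * L = (c i : ℂ) • E i := fun i => by
    have h0 : ((ρ * L * E i * L).trace).re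
        - (((ρ * L * E i).trace).re) ^ 2 / ((ρ * E i).trace).re = 0 := by
      by_contra hne
      apply hcon
      rw [← htot]
      refine Finset.sum_lt_sum (fun j _ => hle j) ⟨i, Finset.mem_univ _, ?_⟩
      refine lt_of_le_of_ne (hle i) fun h => hne (by rw [h]; ring)
    rw [← hterm] at h0
    have := aux_kill (hE i) ((aux_psd hρ (hps i)).2 h0)
    rw [Matrix.mul_sub, Matrix.mul_smul, Matrix.mul_one] at this
    exact sub_eq_zero.mp this
  have hcomm : ∀ i, E i * L = L * E i := fun i => by
    have := congrArg Matrix.conjTranspose (hEL i)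
    rw [Matrix.conjTranspose_mul, Matrix.conjTranspose_smul, hL.eq, (hE i).isHermitian.eq] at this
    rw [hEL, this]
    simp
  have hH : ∀ B : Matrix (Fin d) (Fin d) ℂ, B.IsHermitian → B * L = L * B := fun B hB => by
    refine Submodule.span_induction (p := fun B _ => B * L = L * B) ?_ ?_ ?_ ?_ (hIC B hB)
    · rintro _ ⟨i, rfl⟩; exact hcomm i
    · simp
    · intro x y _ _ hx hy; rw [Matrix.add_mul, Matrix.mul_add, hx, hy]
    · intro a x _ hx; rw [Matrix.smul_mul, Matrix.mul_smul, hx]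
  have hall : ∀ B : Matrix (Fin d) (Fin d) ℂ, Commute B L := fun B => by
    have h1 := hH (B + Bᴴ) (by simp [Matrix.IsHermitian, add_comm])
    have h2 := hH (Complex.I • (B - Bᴴ)) (by
      simp [Matrix.IsHermitian, Matrix.conjTranspose_smul, ← smul_neg])
    rw [Matrix.smul_mul, Matrix.mul_smul] at h2
    have h2 := smul_right_injective _ Complex.I_ne_zero h2
    rw [Matrix.add_mul, Matrix.mul_add] at h1
    rw [Matrix.sub_mul, Matrix.mul_sub] at h2
    have h3 : (2:ℂ) • (B * L) = (2:ℂ) • (L * B) := by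
      rw [two_smul, two_smul]
      calc B * L + B * L = (B * L + Bᴴ * L) + (B * L - Bᴴ * L) := by abel
        _ = (L * B + L * Bᴴ) + (L * B - L * Bᴴ) := by rw [h1, h2]
        _ = L * B + L * B := by abel
    exact smul_right_injective _ (two_ne_zero) h3
  obtain ⟨z, hz⟩ := Matrix.mem_range_scalar_of_commute_single (M := L) (fun i j _ => hall _)
  have hz' : L = z • 1 := by rw [← hz]; simp [Matrix.smul_one_eq_diagonal]
  have hre : z.re = 0 := by
    rw [hz', Matrix.mul_smul, Matrix.mul_one, Matrix.trace_smul, hρtr] at hmz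
    simpa using hmz
  have him : z.im = 0 := by
    have := congrFun (congrFun hL.eq ⟨0, hd⟩) ⟨0, hd⟩
    rw [hz'] at this
    simp at this
    exact Complex.conj_eq_iff_im.mp this
  apply hLne
  have hz0 : z = 0 := Complex.ext hre him
  rw [hz', hz0]
  simp
end

section
/- Let d be a positive integer and let {E_i}_{i∈I} be a finite family of nonzero positive semidefinite Hermitian d×d complex matrices with Σ_i E_i = 𝟙 whose real span is the whole space of Hermitian d×d matrices (an informationally complete POVM). If real numbers (γ_i)_{i∈I} satisfy γ_j · Tr[E_j] = Σ_i Tr[E_j E_i] · γ_i for every j ∈ I, then all the γ_i are equal to one another. -/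
open Matrix
open scoped ComplexOrder

open scoped MatrixOrder in
lemma psd_sq {d : ℕ} {A : Matrix (Fin d) (Fin d) ℂ} (hA : A.PosSemidef) :
    ∃ X : Matrix (Fin d) (Fin d) ℂ, A = Xᴴ * X :=
  CStarAlgebra.nonneg_iff_eq_star_mul_self.mp hA.nonneg

lemma psd_factor_s16 {d : ℕ} {A B : Matrix (Fin d) (Fin d) ℂ} (hA : A.PosSemidef)
    (hB : B.PosSemidef) : 0 ≤ (A * B).trace.re ∧ ((A * B).trace.re = 0 → A * B = 0) := by
  obtain ⟨X, rfl⟩ : ∃ X : Matrix (Fin d) (Fin d) ℂ, A = Xᴴ * X :=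
    psd_sq hA
  obtain ⟨Y, rfl⟩ : ∃ X : Matrix (Fin d) (Fin d) ℂ, B = Xᴴ * X :=
    psd_sq hB
  have h1 : (Xᴴ * X * (Yᴴ * Y)).trace = ((X * Yᴴ)ᴴ * (X * Yᴴ)).trace := by
    rw [conjTranspose_mul, conjTranspose_conjTranspose, ← Matrix.mul_assoc, Matrix.trace_mul_comm]
    simp only [Matrix.mul_assoc]
  have h2 : 0 ≤ ((X * Yᴴ)ᴴ * (X * Yᴴ)).trace :=
    (Matrix.posSemidef_conjTranspose_mul_self (X * Yᴴ)).trace_nonneg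
  rw [h1]
  obtain ⟨h3, h4⟩ := Complex.le_def.mp h2
  refine ⟨h3, fun h => ?_⟩
  have h5 : ((X * Yᴴ)ᴴ * (X * Yᴴ)).trace = 0 := Complex.ext h h4.symm
  rw [Matrix.trace_conjTranspose_mul_self_eq_zero_iff] at h5
  calc Xᴴ * X * (Yᴴ * Y) = Xᴴ * (X * Yᴴ) * Y := by simp only [Matrix.mul_assoc]
    _ = 0 := by rw [h5]; simp

/-- For an informationally complete POVM, any real weights `γ_i` that are invariant
under averaging with respect to the transition probabilities
`p(i|j) = Tr[E_j E_i]/Tr[E_j]` — i.e. `γ_j Tr[E_j] = Σ_i Tr[E_j E_i] γ_i` for all `j` —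
must all be equal. -/
theorem stmt16 (d : ℕ) (hd : 0 < d) (ι : Type) [Fintype ι]
    (E : ι → Matrix (Fin d) (Fin d) ℂ)
    (hE : ∀ i, (E i).PosSemidef) (hEne : ∀ i, E i ≠ 0)
    (hsum : ∑ i, E i = 1)
    (hIC : ∀ A : Matrix (Fin d) (Fin d) ℂ, A.IsHermitian →
      A ∈ Submodule.span ℝ (Set.range E))
    (γ : ι → ℝ)
    (havg : ∀ j, (γ j : ℂ) * (E j).trace = ∑ i, (E j * E i).trace * (γ i : ℂ)) :
    ∀ i j, γ i = γ j := by
  have hk0 : ∀ i j, 0 ≤ (E i * E j).trace.re := fun i j => (psd_factor_s16 (hE i) (hE j)).1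
  have hsymm : ∀ i j, (E i * E j).trace.re = (E j * E i).trace.re := fun i j => by
    rw [Matrix.trace_mul_comm]
  have hrow : ∀ j, ∑ i, (E j * E i).trace.re = (E j).trace.re := fun j => by
    rw [← Complex.re_sum, ← Matrix.trace_sum, ← Finset.mul_sum, hsum, Matrix.mul_one]
  have hav : ∀ j, γ j * ∑ i, (E j * E i).trace.re = ∑ i, (E j * E i).trace.re * γ i := fun j => by
    have := congrArg Complex.re (havg j)
    rw [Complex.re_ofReal_mul, Complex.re_sum] at this
    simpa [hrow] using this
  have key : ∀ i j, γ i ≠ γ j → E i * E j = 0 := by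
    generalize hk : (fun i j => (E i * E j).trace.re) = k
    have hk' : ∀ i j, (E i * E j).trace.re = k i j := fun i j => by rw [← hk]
    simp only [hk'] at hk0 hsymm hav
    have h1 : ∑ j, ∑ i, k j i * γ j * (γ j - γ i) = 0 := by
      refine Finset.sum_eq_zero fun j _ => ?_
      have := hav j
      rw [Finset.mul_sum, ← sub_eq_zero, ← Finset.sum_sub_distrib] at this
      rw [← mul_zero (γ j), ← this, Finset.mul_sum]
      exact Finset.sum_congr rfl fun i _ => by ring
    have h2 : ∑ j, ∑ i, k j i * γ i * (γ i - γ j) = 0 := by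
      rw [Finset.sum_comm, ← h1]
      exact Finset.sum_congr rfl fun i _ => Finset.sum_congr rfl fun j _ => by rw [hsymm]
    have h3 : ∑ j, ∑ i, k j i * (γ j - γ i) ^ 2 = 0 := by
      rw [← add_zero (0:ℝ)]
      nth_rw 1 [← h1]
      rw [← h2, ← Finset.sum_add_distrib]
      refine Finset.sum_congr rfl fun j _ => ?_
      rw [← Finset.sum_add_distrib]
      exact Finset.sum_congr rfl fun i _ => by ring
    intro i j hij
    have hn : ∀ j i, 0 ≤ k j i * (γ j - γ i) ^ 2 := fun j i => mul_nonneg (hk0 _ _) (sq_nonneg _)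
    rw [Finset.sum_eq_zero_iff_of_nonneg fun j _ => Finset.sum_nonneg fun i _ => hn j i] at h3
    have h4 := h3 i (Finset.mem_univ _)
    rw [Finset.sum_eq_zero_iff_of_nonneg fun j _ => hn _ _] at h4
    have h5 := h4 j (Finset.mem_univ _)
    apply (psd_factor_s16 (hE i) (hE j)).2
    rw [hk']
    exact (mul_eq_zero.mp h5).resolve_right (pow_ne_zero _ (sub_ne_zero.mpr hij))
  intro i j
  by_contra hij
  have hH : ∀ A : Matrix (Fin d) (Fin d) ℂ, A.IsHermitian → E i * A * E j = 0 := by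
    intro A hA
    refine Submodule.span_induction (p := fun A _ => E i * A * E j = 0) ?_ ?_ ?_ ?_ (hIC A hA)
    · rintro _ ⟨l, rfl⟩
      by_cases h : γ i = γ l
      · rw [Matrix.mul_assoc, key l j (h ▸ hij), Matrix.mul_zero]
      · rw [key i l h, Matrix.zero_mul]
    · simp
    · intro x y _ _ hx hy
      rw [Matrix.mul_add, Matrix.add_mul, hx, hy, add_zero]
    · intro a x _ hx
      rw [Matrix.mul_smul, Matrix.smul_mul, hx, smul_zero]
  have hall : ∀ A : Matrix (Fin d) (Fin d) ℂ, E i * A * E j = 0 := by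
    intro A
    have h1 := hH (A + Aᴴ) (by simp [Matrix.IsHermitian, add_comm])
    have h2 := hH (Complex.I • (A - Aᴴ)) (by
      simp [Matrix.IsHermitian, conjTranspose_smul, ← smul_neg])
    rw [Matrix.mul_smul, Matrix.smul_mul, smul_eq_zero] at h2
    have h2 := h2.resolve_left Complex.I_ne_zero
    have h3 : (2:ℂ) • (E i * A * E j) = 0 := by
      have : (2:ℂ) • (E i * A * E j) = E i * (A + Aᴴ) * E j + E i * (A - Aᴴ) * E j := by
        rw [two_smul]; noncomm_ring
      rw [this, h1, h2, add_zero]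
    exact (smul_eq_zero.mp h3).resolve_left two_ne_zero
  have hex : ∀ l, ∃ a b, E l a b ≠ 0 := fun l => by
    by_contra! h
    exact hEne l (Matrix.ext h)
  obtain ⟨a, b, hab⟩ := hex i
  obtain ⟨c, e, hce⟩ := hex j
  have := congrFun (congrFun (hall (Matrix.single b c 1)) a) e
  rw [Matrix.mul_assoc, Matrix.mul_apply, Finset.sum_eq_single b] at this
  · simp at this
    tauto
  · intro x _ hx
    simp [hx]
  · simp
end
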